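/- For every k ≥ 1, if p is a shortest (s,t)-path in G^k that contains the vertex y^k_1 and q is a shortest (s,t)-path in G^k that contains the vertex y^k_6, then every reconfiguration sequence from p to q has length at least 9(2^k − 1); in particular the reconfiguration distance between p and q is at least 9(2^k − 1). -/

import Mathlib

/-- Vertices of the graph `G^k`: `s`, `t`, vertices `x^{ℓ+1}_{i+1}` (for `ℓ : Fin k`, `i : Fin 7`)
and `y^{ℓ+1}_{i+1}` (for `ℓ : Fin k`, `i : Fin 6`).  A value `ℓ : Fin k` encodes level `ℓ+1`,
and an index `i : Fin 7` (resp. `Fin 6`) encodes the subscript `i+1`. -/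
inductive GVert (k : ℕ) : Type where
  | s : GVert k
  | t : GVert k
  | x (ℓ : Fin k) (i : Fin 7) : GVert k
  | y (ℓ : Fin k) (i : Fin 6) : GVert k
deriving DecidableEq, Fintype

/-- The (oriented) edge relation generating the graph `G^k`. -/
def gkRel (k : ℕ) : GVert k → GVert k → Prop
  | GVert.s, GVert.x ℓ _ => (ℓ : ℕ) = k - 1
  | GVert.x ℓ i, GVert.y ℓ' i' => ℓ = ℓ' ∧ ((i : ℕ) = (i' : ℕ) ∨ (i : ℕ) = (i' : ℕ) + 1)
  | GVert.y ℓ i, GVert.x ℓ' j => (ℓ : ℕ) = (ℓ' : ℕ) + 1 ∧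
      (((i : ℕ) = 0 ∨ (i : ℕ) = 2 ∨ (i : ℕ) = 4) ∨
        ((i : ℕ) = 1 ∧ (j : ℕ) = 0) ∨ ((i : ℕ) = 3 ∧ (j : ℕ) = 6) ∨
        ((i : ℕ) = 5 ∧ (j : ℕ) = 0))
  | GVert.y ℓ _, GVert.t => (ℓ : ℕ) = 0
  | _, _ => False

/-- The graph `G^k`. -/
def Gk (k : ℕ) : SimpleGraph (GVert k) := SimpleGraph.fromRel (gkRel k)

/-- `p` is a shortest `(s,t)`-path in `H`, recorded as the sequence of its `L+1` vertices;
its length `L` is required to equal the distance between `s` and `t`. -/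
def IsShortestSTPath {V : Type*} (H : SimpleGraph V) (s t : V) (L : ℕ)
    (p : Fin (L + 1) → V) : Prop :=
  p 0 = s ∧ p (Fin.last L) = t ∧ (∀ i : Fin L, H.Adj (p i.castSucc) (p i.succ)) ∧
    L = H.dist s t

/-- Two vertex sequences differ in exactly one position. -/
def DiffOne {N : ℕ} {α : Type*} (p q : Fin N → α) : Prop :=
  ∃ i, p i ≠ q i ∧ ∀ j, j ≠ i → p j = q j

/-- `ρ 0, ρ 1, …, ρ ℓ` is a reconfiguration sequence of length `ℓ` from the shortest
`(s,t)`-path `p` to the shortest `(s,t)`-path `q`: all its members are shortest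
`(s,t)`-paths and consecutive members differ in exactly one position. -/
def SPReconfSeq {V : Type*} (H : SimpleGraph V) (s t : V) (L : ℕ)
    (ρ : ℕ → (Fin (L + 1) → V)) (ℓ : ℕ) (p q : Fin (L + 1) → V) : Prop :=
  ρ 0 = p ∧ ρ ℓ = q ∧ (∀ i ≤ ℓ, IsShortestSTPath H s t L (ρ i)) ∧
    ∀ i < ℓ, DiffOne (ρ i) (ρ (i + 1))

/-!
A shortest path meets level `ℓ` in an edge `x_i y_j` with `i ∈ {j, j + 1}`, that is, in an edge of
the path `x_1 y_1 x_2 y_2 … x_7`, and a reconfiguration step moves the edge of a single level to a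
neighbouring edge. Since `y_2`, `y_4`, `y_6` are joined to `x_1`, `x_7`, `x_1` of the level below,
the edge of a level can travel from `y_1` to `y_6` only if the edge of the level below travels from
one end to the other and back. With the 9 moves made on the level itself, this gives the recursion
`D (n + 1) = 2 * D n + 9` for the cost, solved by `D n = 9 * (2 ^ n - 1)`. The progress made,
counted along this recursion, is a potential that is `0` for a path through `y^k_1` and `D k` for a
path through `y^k_6`, and that changes by at most `1` in each step.
-/

section Sequences

variable {V : Type*} {L : ℕ}

theorem add_val_eq_of_castSucc_le {g : Fin (L + 1) → ℕ}
    (hstep : ∀ i : Fin L, g i.castSucc ≤ g i.succ + 1) (hends : g (Fin.last L) + L ≤ g 0)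
    (i : Fin (L + 1)) : g i + i = g 0 := by
  have hmono : Monotone fun i : Fin (L + 1) ↦ g i + (i : ℕ) :=
    Fin.monotone_iff_le_succ.2 fun i ↦ by
      have := hstep i
      simp only [Fin.val_castSucc, Fin.val_succ]
      omega
  have hlower : g 0 ≤ g i + i := by simpa using hmono (Fin.zero_le i)
  have hupper : g i + i ≤ g (Fin.last L) + L := by simpa using hmono (Fin.le_last i)
  exact le_antisymm (hupper.trans hends) hlower

/-- The entry of a finite sequence that stands `n` places before its last one; beyond the length
of the sequence this is its first entry. -/
def fromEnd (p : Fin (L + 1) → V) (n : ℕ) : V :=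
  p ⟨L - n, by omega⟩

theorem fromEnd_of_add_val_eq (p : Fin (L + 1) → V) {n : ℕ} {i : Fin (L + 1)} (h : n + i = L) :
    fromEnd p n = p i :=
  congrArg p (Fin.ext (show L - n = i by omega))

theorem DiffOne.exists_fromEnd_eq {p q : Fin (L + 1) → V} (h : DiffOne p q) :
    ∃ m, ∀ n ≤ L, n ≠ m → fromEnd p n = fromEnd q n := by
  obtain ⟨i, -, hi⟩ := h
  refine ⟨L - i, fun n hn hne ↦ hi _ fun heq ↦ hne ?_⟩
  have : L - n = i := congrArg Fin.val heq
  omega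

theorem SPReconfSeq.le_add_length {H : SimpleGraph V} {s t : V} {p q : Fin (L + 1) → V}
    {ρ : ℕ → Fin (L + 1) → V} {ℓ : ℕ} (h : SPReconfSeq H s t L ρ ℓ p q)
    {Φ : (Fin (L + 1) → V) → ℕ}
    (hΦ : ∀ p q, IsShortestSTPath H s t L p → IsShortestSTPath H s t L q → DiffOne p q →
      Φ q ≤ Φ p + 1) :
    Φ q ≤ Φ p + ℓ := by
  obtain ⟨rfl, rfl, hpath, hdiff⟩ := h
  suffices ∀ n ≤ ℓ, Φ (ρ n) ≤ Φ (ρ 0) + n from this ℓ le_rfl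
  intro n hn
  induction n with
  | zero => rfl
  | succ n ih =>
    calc Φ (ρ (n + 1)) ≤ Φ (ρ n) + 1 :=
          hΦ _ _ (hpath n (by omega)) (hpath (n + 1) hn) (hdiff n hn)
      _ ≤ Φ (ρ 0) + (n + 1) := Nat.succ_le_succ (ih (by omega))

end Sequences

section Potential

/-- The bound `D n` of the theorem on the number of steps that sweep levels `1, …, n`, that is,
drive level `n` from `y^n_1` to `y^n_6`. -/
def sweepLength (n : ℕ) : ℕ :=
  9 * (2 ^ n - 1)

theorem sweepLength_succ (n : ℕ) : sweepLength (n + 1) = 2 * sweepLength n + 9 := by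
  have := Nat.one_le_two_pow (n := n)
  simp only [sweepLength, pow_succ]
  omega

/-- The progress contributed by the levels below a level standing at `y_{j+1}`, when these levels
have potential `φ` and their full sweep costs `D`. They are swept forwards at `y_3` (`j = 2`) and
backwards at `y_5` (`j = 4`). -/
def sweepProgress (D φ : ℕ) : ℕ → ℕ
  | 0 | 1 => 0
  | 2 => φ
  | 3 => D
  | 4 => 2 * D - φ
  | _ => 2 * D

/-- The restriction that a level standing at `y_{j+1}` puts on the potential `φ` of the levels
below: `y_2` and `y_6` hold them at the start of their sweep, `y_4` at its end. -/
def IsSynced (D φ j : ℕ) : Prop :=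
  (j = 1 ∨ j = 5 → φ = 0) ∧ (j = 3 → φ = D)

theorem sweepProgress_of_five_le (D φ : ℕ) {j : ℕ} (hj : 5 ≤ j) : sweepProgress D φ j = 2 * D := by
  obtain ⟨i, rfl⟩ := Nat.exists_eq_add_of_le' hj
  rfl

theorem sweepProgress_succ {D φ j : ℕ} (h : IsSynced D φ j) (h' : IsSynced D φ (j + 1)) :
    sweepProgress D φ (j + 1) = sweepProgress D φ j := by
  obtain hj | hj := le_or_gt 5 j
  · rw [sweepProgress_of_five_le D φ hj, sweepProgress_of_five_le D φ (by omega)]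
  · unfold IsSynced at h h'
    interval_cases j <;> simp only [sweepProgress] <;> omega

theorem sweepProgress_le_add_one {D φ ψ : ℕ} (h : φ ≤ ψ + 1) (h' : ψ ≤ φ + 1) (j : ℕ) :
    sweepProgress D φ j ≤ sweepProgress D ψ j + 1 := by
  unfold sweepProgress
  split <;> omega

/-- The potential of the lowest `n` levels, where `a l` is the number of the edge used on level
`l` in the path `x_1 y_1 x_2 … x_7`. The edges `0` and `1`, which contain `y_1`, count as the start
of the sweep and `10` and `11` as its end: hence the truncated `- 1` and the minimum. -/
def potential (a : ℕ → ℕ) : ℕ → ℕ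
  | 0 => 0
  | n + 1 => min (sweepLength (n + 1))
      (a n - 1 + sweepProgress (sweepLength n) (potential a n) (a n / 2))

variable {k n m : ℕ} {a b : ℕ → ℕ}

theorem potential_succ_eq_zero (h : a n ≤ 1) : potential a (n + 1) = 0 := by
  have hdiv : a n / 2 = 0 := by omega
  simp only [potential, hdiv, sweepProgress]
  omega

theorem potential_succ_eq_sweepLength (h : 10 ≤ a n) :
    potential a (n + 1) = sweepLength (n + 1) := by
  rw [potential, sweepProgress_of_five_le _ _ (by omega), sweepLength_succ]
  omega

theorem potential_congr (h : ∀ l < n, a l = b l) : potential a n = potential b n := by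
  induction n with
  | zero => rfl
  | succ n ih => simp only [potential, h n (by omega), ih fun l hl ↦ h l (by omega)]

/-- `a` satisfies, on the levels below `k`, the constraints that the edges `y^{ℓ+1}_i x^ℓ_j` of
`G^k` put on the edge numbers of a shortest path; the edge numbered `a l` contains the vertex `y`
of index `a l / 2`. -/
def IsProfile (k : ℕ) (a : ℕ → ℕ) : Prop :=
  ∀ l, l + 1 < k →
    (a (l + 1) / 2 = 1 ∨ a (l + 1) / 2 = 5 → a l ≤ 1) ∧ (a (l + 1) / 2 = 3 → 10 ≤ a l)

theorem IsProfile.isSynced_potential (ha : IsProfile k a) (hn : n < k) :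
    IsSynced (sweepLength n) (potential a n) (a n / 2) := by
  cases n with
  | zero => exact ⟨fun _ ↦ rfl, fun _ ↦ rfl⟩
  | succ n =>
    obtain ⟨hlow, hhigh⟩ := ha n hn
    exact ⟨fun h ↦ potential_succ_eq_zero (hlow h), fun h ↦ potential_succ_eq_sweepLength (hhigh h)⟩

/-- The two profiles agree below `k` except perhaps on level `m`, where they differ by at most
`1`. -/
def IsNearAt (k m : ℕ) (a b : ℕ → ℕ) : Prop :=
  (∀ l < k, l ≠ m → a l = b l) ∧ (m < k → a m ≤ b m + 1 ∧ b m ≤ a m + 1)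

theorem IsNearAt.symm (h : IsNearAt k m a b) : IsNearAt k m b a :=
  ⟨fun l hl hne ↦ (h.1 l hl hne).symm, fun hm ↦ (h.2 hm).symm⟩

/-- Within one `y` the lower levels contribute equally, and between neighbouring `y`s one of the
two synchronises them. -/
theorem sweepProgress_div_two_eq {D φ u v : ℕ} (hu : IsSynced D φ (u / 2))
    (hv : IsSynced D φ (v / 2)) (huv : u ≤ v + 1) (hvu : v ≤ u + 1) :
    sweepProgress D φ (u / 2) = sweepProgress D φ (v / 2) := by
  obtain heq | heq | heq : u / 2 = v / 2 ∨ u / 2 = v / 2 + 1 ∨ v / 2 = u / 2 + 1 := by omega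
  · rw [heq]
  · rw [heq] at hu ⊢
    exact sweepProgress_succ hv hu
  · rw [heq] at hv ⊢
    exact (sweepProgress_succ hu hv).symm

theorem potential_le_add_one (ha : IsProfile k a) (hb : IsProfile k b) (hab : IsNearAt k m a b)
    (hn : n ≤ k) : potential a n ≤ potential b n + 1 := by
  induction n generalizing a b with
  | zero => exact Nat.zero_le _
  | succ n ih =>
    obtain rfl | hne := eq_or_ne n m
    · have hbelow : potential a n = potential b n :=
        potential_congr fun l hl ↦ hab.1 l (by omega) hl.ne
      obtain ⟨hle, hge⟩ := hab.2 hn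
      have hprog := sweepProgress_div_two_eq (ha.isSynced_potential hn)
        (hbelow ▸ hb.isSynced_potential hn) hle hge
      simp only [potential, hprog, ← hbelow]
      omega
    · have hprog := sweepProgress_le_add_one (D := sweepLength n) (ih ha hb hab (by omega))
        (ih hb ha hab.symm (by omega)) (b n / 2)
      simp only [potential, hab.1 n hn hne]
      omega

end Potential

namespace GVert

variable {k : ℕ} {u v : GVert k}

/-- The distance of a vertex of `G^k` to `t`, for `k ≥ 1`. -/
def height : GVert k → ℕ
  | s => 2 * k + 1
  | t => 0
  | x ℓ _ => 2 * ℓ + 2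
  | y ℓ _ => 2 * ℓ + 1

/-- The subscript of a vertex of `G^k`, counted from `0`; the value at `s` and `t` is a
placeholder. -/
def index : GVert k → ℕ
  | s | t => 0
  | x _ i => i
  | y _ i => i

theorem height_eq_of_gkRel (h : gkRel k u v) : u.height = v.height + 1 := by
  cases u <;> cases v <;> simp only [gkRel, height] at h ⊢ <;> omega

theorem index_eq_or_of_gkRel_y {l : ℕ} (h : gkRel k u v) (hv : v.height = 2 * l + 1) :
    u.index = v.index ∨ u.index = v.index + 1 := by
  cases u <;> cases v <;> simp only [gkRel, height, index] at h hv ⊢ <;> omega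

theorem index_eq_of_gkRel_x {l : ℕ} (h : gkRel k u v) (hv : v.height = 2 * l + 2) :
    (u.index = 1 ∨ u.index = 5 → v.index = 0) ∧ (u.index = 3 → v.index = 6) := by
  cases u <;> cases v <;> simp only [gkRel, height, index] at h hv ⊢ <;> omega

end GVert

open GVert

section ShortestPaths

variable {k : ℕ}

theorem Gk_adj_iff {u v : GVert k} : (Gk k).Adj u v ↔ gkRel k u v ∨ gkRel k v u := by
  refine (SimpleGraph.fromRel_adj _ _ _).trans (and_iff_right_of_imp ?_)
  rintro (h | h) rfl <;> exact absurd (height_eq_of_gkRel h) (by omega)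

theorem height_le_of_adj {u v : GVert k} (h : (Gk k).Adj u v) : u.height ≤ v.height + 1 := by
  obtain h | h := Gk_adj_iff.1 h <;> have := height_eq_of_gkRel h <;> omega

theorem exists_walk_x_t (l : ℕ) (hl : l < k) :
    ∃ w : (Gk k).Walk (x ⟨l, hl⟩ 0) t, w.length = 2 * l + 2 := by
  have hxy (ℓ : Fin k) : (Gk k).Adj (x ℓ 0) (y ℓ 0) := Gk_adj_iff.2 (by simp [gkRel])
  induction l with
  | zero =>
    have hyt : (Gk k).Adj (y ⟨0, hl⟩ 0) t := Gk_adj_iff.2 (by simp [gkRel])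
    exact ⟨.cons (hxy _) (.cons hyt .nil), rfl⟩
  | succ l ih =>
    obtain ⟨w, hw⟩ := ih (by omega)
    have hyx : (Gk k).Adj (y ⟨l + 1, hl⟩ 0) (x ⟨l, by omega⟩ 0) := Gk_adj_iff.2 (by simp [gkRel])
    exact ⟨.cons (hxy _) (.cons hyx w), by simp only [SimpleGraph.Walk.length_cons, hw]; ring⟩

theorem dist_s_t_le [NeZero k] : (Gk k).dist s t ≤ 2 * k + 1 := by
  have hk := NeZero.pos k
  obtain ⟨w, hw⟩ := exists_walk_x_t (k - 1) (Nat.sub_one_lt_of_lt hk)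
  have hsx : (Gk k).Adj s (x ⟨k - 1, by omega⟩ 0) := Gk_adj_iff.2 (by simp [gkRel])
  calc (Gk k).dist s t ≤ (SimpleGraph.Walk.cons hsx w).length := SimpleGraph.dist_le _
    _ = 2 * k + 1 := by rw [SimpleGraph.Walk.length_cons, hw]; omega

/-- The numbers, level by level, of the edges `x^ℓ_i y^ℓ_j` used by a shortest path `p`: in the
path `x_1 y_1 x_2 … x_7` the edge with indices `i` and `j`, counted from `0`, has number
`i + j`. -/
def profile {L : ℕ} (p : Fin (L + 1) → GVert k) (l : ℕ) : ℕ :=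
  (fromEnd p (2 * l + 2)).index + (fromEnd p (2 * l + 1)).index

namespace IsShortestSTPath

variable [NeZero k] {L l n : ℕ} {p q : Fin (L + 1) → GVert k}

theorem height_add_val (hp : IsShortestSTPath (Gk k) s t L p) (i : Fin (L + 1)) :
    (p i).height + i = 2 * k + 1 := by
  obtain ⟨hs, ht, hadj, hdist⟩ := hp
  have hL : L ≤ 2 * k + 1 := hdist.trans_le dist_s_t_le
  have := add_val_eq_of_castSucc_le (g := fun i ↦ (p i).height) (fun i ↦ height_le_of_adj (hadj i))
    (by simpa only [hs, ht, height, zero_add] using hL) i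
  simpa only [hs, height] using this

theorem length_eq (hp : IsShortestSTPath (Gk k) s t L p) : L = 2 * k + 1 := by
  simpa only [hp.2.1, height, Fin.val_last, zero_add] using hp.height_add_val (Fin.last L)

theorem height_fromEnd (hp : IsShortestSTPath (Gk k) s t L p) (hn : n ≤ L) :
    (fromEnd p n).height = n := by
  have hheight : (fromEnd p n).height + (L - n) = 2 * k + 1 := hp.height_add_val _
  have := hp.length_eq
  omega

theorem fromEnd_height (hp : IsShortestSTPath (Gk k) s t L p) (i : Fin (L + 1)) :
    fromEnd p (p i).height = p i :=
  fromEnd_of_add_val_eq p ((hp.height_add_val i).trans hp.length_eq.symm)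

theorem gkRel_fromEnd (hp : IsShortestSTPath (Gk k) s t L p) (hn : n < L) :
    gkRel k (fromEnd p (n + 1)) (fromEnd p n) := by
  have hadj : (Gk k).Adj (fromEnd p (n + 1)) (fromEnd p n) := by
    let i : Fin L := ⟨L - (n + 1), by omega⟩
    have hsucc : fromEnd p n = p i.succ :=
      fromEnd_of_add_val_eq p (show n + (L - (n + 1) + 1) = L by omega)
    rw [hsucc]
    exact hp.2.2.1 i
  refine (Gk_adj_iff.1 hadj).resolve_right fun hrev ↦ ?_
  have := height_eq_of_gkRel hrev
  rw [hp.height_fromEnd hn, hp.height_fromEnd hn.le] at this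
  omega

theorem index_fromEnd_x (hp : IsShortestSTPath (Gk k) s t L p) (hl : l < k) :
    (fromEnd p (2 * l + 2)).index = (fromEnd p (2 * l + 1)).index ∨
      (fromEnd p (2 * l + 2)).index = (fromEnd p (2 * l + 1)).index + 1 := by
  have := hp.length_eq
  exact index_eq_or_of_gkRel_y (hp.gkRel_fromEnd (by omega)) (hp.height_fromEnd (by omega))

theorem profile_div_two (hp : IsShortestSTPath (Gk k) s t L p) (hl : l < k) :
    profile p l / 2 = (fromEnd p (2 * l + 1)).index := by
  have := hp.index_fromEnd_x hl
  unfold profile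
  omega

theorem profile_div_two_of_eq_y (hp : IsShortestSTPath (Gk k) s t L p) {ℓ : Fin k} {j : Fin 6}
    (hy : ∃ i, p i = y ℓ j) : profile p ℓ / 2 = j := by
  obtain ⟨i, hi⟩ := hy
  have hfrom := hp.fromEnd_height i
  rw [hi] at hfrom
  rw [hp.profile_div_two ℓ.isLt]
  exact congrArg index hfrom

theorem isProfile_profile (hp : IsShortestSTPath (Gk k) s t L p) : IsProfile k (profile p) := by
  intro l hl
  have := hp.length_eq
  have hrel : gkRel k (fromEnd p (2 * (l + 1) + 1)) (fromEnd p (2 * l + 2)) :=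
    hp.gkRel_fromEnd (n := 2 * l + 2) (by omega)
  have hindex := index_eq_of_gkRel_x hrel (hp.height_fromEnd (by omega))
  have hlevel := hp.index_fromEnd_x (l := l) (by omega)
  rw [hp.profile_div_two hl, profile]
  omega

theorem exists_isNearAt_profile (hp : IsShortestSTPath (Gk k) s t L p)
    (hq : IsShortestSTPath (Gk k) s t L q) (hpq : DiffOne p q) :
    ∃ m, IsNearAt k m (profile p) (profile q) := by
  have := hp.length_eq
  obtain ⟨m, hm⟩ := hpq.exists_fromEnd_eq
  refine ⟨(m - 1) / 2, fun l _ hne ↦ ?_, fun hlt ↦ ?_⟩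
  · rw [profile, profile, hm (2 * l + 2) (by omega) (by omega),
      hm (2 * l + 1) (by omega) (by omega)]
  · generalize (m - 1) / 2 = l at hlt ⊢
    have hplevel := hp.index_fromEnd_x hlt
    have hqlevel := hq.index_fromEnd_x hlt
    unfold profile
    obtain hne | hne : 2 * l + 2 ≠ m ∨ 2 * l + 1 ≠ m := by omega
    all_goals have := congrArg index (hm _ (by omega) hne)
    all_goals omega

theorem potential_profile_le_add_one (hp : IsShortestSTPath (Gk k) s t L p)
    (hq : IsShortestSTPath (Gk k) s t L q) (hpq : DiffOne p q) :
    potential (profile q) k ≤ potential (profile p) k + 1 := by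
  obtain ⟨m, hm⟩ := hp.exists_isNearAt_profile hq hpq
  exact potential_le_add_one hq.isProfile_profile hp.isProfile_profile hm.symm le_rfl

end IsShortestSTPath

end ShortestPaths

/-- if `p` is a shortest `(s,t)`-path in `G^k` through `y^k_1` and `q` is a
shortest `(s,t)`-path in `G^k` through `y^k_6`, then every reconfiguration sequence from
`p` to `q` has length at least `9(2^k - 1)`. -/
theorem stmt0 (k : ℕ) (hk : 1 ≤ k) (L : ℕ) (p q : Fin (L + 1) → GVert k)
    (hp : IsShortestSTPath (Gk k) GVert.s GVert.t L p)
    (hq : IsShortestSTPath (Gk k) GVert.s GVert.t L q)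
    (hpy : ∃ i, p i = GVert.y ⟨k - 1, by omega⟩ ⟨0, by omega⟩)
    (hqy : ∃ i, q i = GVert.y ⟨k - 1, by omega⟩ ⟨5, by omega⟩)
    (ℓ : ℕ) (ρ : ℕ → (Fin (L + 1) → GVert k))
    (hρ : SPReconfSeq (Gk k) GVert.s GVert.t L ρ ℓ p q) :
    9 * (2 ^ k - 1) ≤ ℓ := by
  obtain ⟨n, rfl⟩ := Nat.exists_eq_add_of_le' hk
  have hstart : profile p n / 2 = 0 := hp.profile_div_two_of_eq_y hpy
  have hend : profile q n / 2 = 5 := hq.profile_div_two_of_eq_y hqy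
  calc 9 * (2 ^ (n + 1) - 1)
    _ = potential (profile q) (n + 1) := (potential_succ_eq_sweepLength (by omega)).symm
    _ ≤ potential (profile p) (n + 1) + ℓ :=
      hρ.le_add_length (Φ := fun p ↦ potential (profile p) (n + 1))
        fun _ _ hp hq hpq ↦ hp.potential_profile_le_add_one hq hpq
    _ = ℓ := by rw [potential_succ_eq_zero (by omega), zero_add]
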